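/- Fix 1 ≤ i ≤ n²/2 and j ∈ {0,1}, and let γ ∈ u be any element satisfying K^{-1}K̂·γ = q^{-2i}·γ and F·γ = β_{2i,j}. Then for every 1 ≤ s ≤ n²−1: F·E^sγ − q^{-s}·E^sβ_{2i,j} = s_{q^{-1}}(1 − q^{1−s−2i})·E^{s−1}γ. -/

import Mathlib

noncomputable section

open scoped TensorProduct

namespace QFL

/-- The defining relations of the quasi-Frobenius-Lusztig kernel `ũ_q(sl₂)`,
on the free algebra on four generators `K = ι 0`, `K̂ = ι 1`, `E = ι 2`, `F = ι 3`. -/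
inductive Rel (k : Type) [Field k] (n : ℕ) (q : k) :
    FreeAlgebra k (Fin 4) → FreeAlgebra k (Fin 4) → Prop
  | Kord : Rel k n q (FreeAlgebra.ι k (0 : Fin 4) ^ n) 1
  | Khord : Rel k n q (FreeAlgebra.ι k (1 : Fin 4) ^ n)
      ((FreeAlgebra.ι k (0 : Fin 4) ^ (n - 1)) ^ 2)
  | KKh : Rel k n q (FreeAlgebra.ι k (0 : Fin 4) * FreeAlgebra.ι k (1 : Fin 4))
      (FreeAlgebra.ι k (1 : Fin 4) * FreeAlgebra.ι k (0 : Fin 4))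
  | KE : Rel k n q
      (FreeAlgebra.ι k (0 : Fin 4) * FreeAlgebra.ι k (2 : Fin 4) *
        FreeAlgebra.ι k (0 : Fin 4) ^ (n - 1))
      (q ^ n • FreeAlgebra.ι k (2 : Fin 4))
  | KF : Rel k n q
      (FreeAlgebra.ι k (0 : Fin 4) * FreeAlgebra.ι k (3 : Fin 4) *
        FreeAlgebra.ι k (0 : Fin 4) ^ (n - 1))
      ((q ^ n)⁻¹ • FreeAlgebra.ι k (3 : Fin 4))
  | KhE : Rel k n q
      (FreeAlgebra.ι k (1 : Fin 4) * FreeAlgebra.ι k (2 : Fin 4) *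
        FreeAlgebra.ι k (1 : Fin 4) ^ (n ^ 2 - 1))
      ((q ^ n * (q ^ 2)⁻¹) • FreeAlgebra.ι k (2 : Fin 4))
  | KhF : Rel k n q
      (FreeAlgebra.ι k (1 : Fin 4) * FreeAlgebra.ι k (3 : Fin 4) *
        FreeAlgebra.ι k (1 : Fin 4) ^ (n ^ 2 - 1))
      (((q ^ n)⁻¹ * q ^ 2) • FreeAlgebra.ι k (3 : Fin 4))
  | Enil : Rel k n q (FreeAlgebra.ι k (2 : Fin 4) ^ n ^ 2) 0
  | Fnil : Rel k n q (FreeAlgebra.ι k (3 : Fin 4) ^ n ^ 2) 0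
  | EF : Rel k n q
      (FreeAlgebra.ι k (3 : Fin 4) * FreeAlgebra.ι k (2 : Fin 4) -
        q⁻¹ • (FreeAlgebra.ι k (2 : Fin 4) * FreeAlgebra.ι k (3 : Fin 4)))
      (1 - FreeAlgebra.ι k (0 : Fin 4) ^ (n - 1) * FreeAlgebra.ι k (1 : Fin 4))

/-- The algebra `ũ_q(sl₂)` as the quotient of the free algebra by the defining relations. -/
abbrev U (k : Type) [Field k] (n : ℕ) (q : k) := RingQuot (Rel k n q)

variable (k : Type) [Field k] (n : ℕ) (q : k)

def K : U k n q := RingQuot.mkAlgHom k (Rel k n q) (FreeAlgebra.ι k (0 : Fin 4))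
def Kh : U k n q := RingQuot.mkAlgHom k (Rel k n q) (FreeAlgebra.ι k (1 : Fin 4))
def E : U k n q := RingQuot.mkAlgHom k (Rel k n q) (FreeAlgebra.ι k (2 : Fin 4))
def F : U k n q := RingQuot.mkAlgHom k (Rel k n q) (FreeAlgebra.ι k (3 : Fin 4))

/-- `K⁻¹ = K^(n-1)`. -/
def Kinv : U k n q := K k n q ^ (n - 1)
/-- `K̂⁻¹ = K̂^(n²-1)`. -/
def Khinv : U k n q := Kh k n q ^ (n ^ 2 - 1)

/-- `φ_{2i} = (2/n²) Σ_{t<n²/2} q^{-2it} (K⁻¹K̂)^t`. -/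
def phi (i : ℕ) : U k n q :=
  ((n ^ 2 : k)⁻¹ * 2) • ∑ t ∈ Finset.range (n ^ 2 / 2),
    (q⁻¹ ^ (2 * i * t)) • (Kinv k n q * Kh k n q) ^ t

/-- `𝟙₀ = (1/2)(1 + KK̂^(n/2))` and `𝟙₁ = (1/2)(1 - KK̂^(n/2))`. -/
def oneJ (j : ℕ) : U k n q :=
  if j = 0 then (2 : k)⁻¹ • (1 + K k n q * Kh k n q ^ (n / 2))
  else (2 : k)⁻¹ • (1 - K k n q * Kh k n q ^ (n / 2))

/-- The idempotent `e_{2i,j} = φ_{2i} 𝟙_j`. -/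
def eIdem (i j : ℕ) : U k n q := phi k n q i * oneJ k n q j

/-- `α_{2i,j} = F^(n²-1) e_{2i,j}`. -/
def alpha (i j : ℕ) : U k n q := F k n q ^ (n ^ 2 - 1) * eIdem k n q i j

/-- `β_{2i,j} = E^(2i-2) α_{2i,j}`. -/
def beta (i j : ℕ) : U k n q := E k n q ^ (2 * i - 2) * alpha k n q i j

/-- The Gaussian number `s_q = 1 + q + ⋯ + q^(s-1)`. -/
def gauss (x : k) (s : ℕ) : k := ∑ t ∈ Finset.range s, x ^ t

/-- The span of the PBW-type monomials `F^a K^c K̂^d E^b` with `a ≤ n²-2`, `b ≤ n²-1`,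
`c ≤ n-1`, `d ≤ n²-1`. -/
def pbw : Submodule k (U k n q) :=
  Submodule.span k {x | ∃ a b c d : ℕ, a ≤ n ^ 2 - 2 ∧ b ≤ n ^ 2 - 1 ∧ c ≤ n - 1 ∧
    d ≤ n ^ 2 - 1 ∧ x = F k n q ^ a * K k n q ^ c * Kh k n q ^ d * E k n q ^ b}

/-- `γ_{2i,j}`: the unique element of the PBW span with `F·γ = β_{2i,j}`. -/
def gam (i j : ℕ) : U k n q :=
  @dite _ (∃! x, x ∈ pbw k n q ∧ F k n q * x = beta k n q i j)
    (Classical.propDecidable _) (fun h => h.choose) (fun _ => 0)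

/-- The left ideal `P_{2i,j} = u·γ_{2i,j}`. -/
def P (i j : ℕ) : Submodule (U k n q) (U k n q) :=
  Submodule.span (U k n q) {gam k n q i j}

/-- `S_{2i,j} = Soc(P_{2i,j})`, the sum of all simple submodules of `P_{2i,j}`. -/
def S (i j : ℕ) : Submodule (U k n q) (U k n q) :=
  sSup {N : Submodule (U k n q) (U k n q) | N ≤ P k n q i j ∧ IsSimpleModule (U k n q) N}

end QFL

namespace QFL

variable (k : Type) [Field k] (n : ℕ) (q : k)

theorem rel_eq {a b : FreeAlgebra k (Fin 4)} (h : Rel k n q a b) :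
    RingQuot.mkAlgHom k (Rel k n q) a = RingQuot.mkAlgHom k (Rel k n q) b :=
  RingQuot.mkAlgHom_rel k h

theorem K_pow : K k n q ^ n = 1 := by
  have h := rel_eq k n q Rel.Kord
  simp only [map_pow, map_one] at h
  exact h

theorem Kh_pow : Kh k n q ^ n = (K k n q ^ (n - 1)) ^ 2 := by
  have h := rel_eq k n q Rel.Khord
  simp only [map_pow] at h
  exact h

theorem Kh_pow_sq : Kh k n q ^ (n ^ 2) = 1 := by
  rw [pow_two, pow_mul, Kh_pow, ← pow_mul, ← pow_mul,
    show (n - 1) * (2 * n) = n * ((n - 1) * 2) by ring, pow_mul, K_pow, one_pow]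

theorem K_E (hn : 0 < n) : K k n q * E k n q = q ^ n • (E k n q * K k n q) := by
  have h := rel_eq k n q Rel.KE
  simp only [map_mul, map_pow, map_smul] at h
  change K k n q * E k n q * K k n q ^ (n - 1) = q ^ n • E k n q at h
  have h2 := congrArg (· * K k n q) h
  simp only [mul_assoc, smul_mul_assoc] at h2
  rwa [← pow_succ, Nat.sub_add_cancel hn, K_pow, mul_one] at h2

theorem Kh_E (hn : 0 < n) :
    Kh k n q * E k n q = (q ^ n * (q ^ 2)⁻¹) • (E k n q * Kh k n q) := by
  have h := rel_eq k n q Rel.KhE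
  simp only [map_mul, map_pow, map_smul] at h
  change Kh k n q * E k n q * Kh k n q ^ (n ^ 2 - 1) = (q ^ n * (q ^ 2)⁻¹) • E k n q at h
  have h2 := congrArg (· * Kh k n q) h
  simp only [mul_assoc, smul_mul_assoc] at h2
  rwa [← pow_succ, Nat.sub_add_cancel (pow_pos hn 2), Kh_pow_sq, mul_one] at h2

theorem K_pow_E (hn : 0 < n) (m : ℕ) :
    K k n q ^ m * E k n q = (q ^ (n * m)) • (E k n q * K k n q ^ m) := by
  induction m with
  | zero => simp
  | succ m ih =>
    rw [pow_succ, mul_assoc, K_E k n q hn, mul_smul_comm, ← mul_assoc, ih, smul_mul_assoc,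
      smul_smul, mul_assoc, ← pow_add]
    congr 2
    ring

theorem F_E : F k n q * E k n q =
    q⁻¹ • (E k n q * F k n q) + (1 - Kinv k n q * Kh k n q) := by
  have h := rel_eq k n q Rel.EF
  simp only [map_mul, map_pow, map_smul, map_sub, map_one] at h
  exact sub_eq_iff_eq_add'.mp h

theorem g_E (hn : 0 < n) (hq : q ^ (n ^ 2) = 1) :
    (Kinv k n q * Kh k n q) * E k n q = (q⁻¹ ^ 2) • (E k n q * (Kinv k n q * Kh k n q)) := by
  unfold Kinv
  rw [mul_assoc, Kh_E k n q hn, mul_smul_comm, ← mul_assoc, K_pow_E k n q hn, smul_mul_assoc,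
    smul_smul, mul_assoc (E k n q)]
  congr 1
  have : q ^ n * q ^ (n * (n - 1)) = 1 := by
    rw [← pow_add, ← hq]
    congr 1
    obtain ⟨m, rfl⟩ := Nat.exists_eq_succ_of_ne_zero hn.ne'
    simp only [Nat.succ_eq_add_one, Nat.add_sub_cancel]
    ring
  rw [mul_right_comm, this, one_mul, inv_pow]

theorem g_E_pow (hn : 0 < n) (hq : q ^ (n ^ 2) = 1) (c : k) (γ : U k n q)
    (hγ : (Kinv k n q * Kh k n q) * γ = c • γ) (s : ℕ) :
    (Kinv k n q * Kh k n q) * (E k n q ^ s * γ) = (q⁻¹ ^ (2 * s) * c) • (E k n q ^ s * γ) := by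
  induction s with
  | zero => simpa using hγ
  | succ s ih =>
    rw [pow_succ', mul_assoc (E k n q), ← mul_assoc _ (E k n q), g_E k n q hn hq, smul_mul_assoc,
      mul_assoc (E k n q), ih, mul_smul_comm, smul_smul]
    congr 1
    ring

theorem gauss_succ (x : k) (s : ℕ) : gauss k x (s + 1) = x * gauss k x s + 1 := by
  unfold gauss
  rw [Finset.sum_range_succ', Finset.mul_sum, pow_zero]
  simp only [pow_succ']

theorem gauss_succ' (x : k) (s : ℕ) : gauss k x (s + 1) = gauss k x s + x ^ s := by
  unfold gauss
  rw [Finset.sum_range_succ]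

theorem main_aux (hn : 0 < n) (hq : q ^ (n ^ 2) = 1) (c : k) (γ β : U k n q)
    (hγ : (Kinv k n q * Kh k n q) * γ = c • γ) (hβ : F k n q * γ = β) (s : ℕ) :
    F k n q * (E k n q ^ (s + 1) * γ) = (q⁻¹ ^ (s + 1)) • (E k n q ^ (s + 1) * β) +
      (gauss k q⁻¹ (s + 1) * (1 - q⁻¹ ^ s * c)) • (E k n q ^ s * γ) := by
  have key : ∀ y : U k n q, F k n q * (E k n q * y) =
      q⁻¹ • (E k n q * (F k n q * y)) + (y - (Kinv k n q * Kh k n q) * y) := by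
    intro y
    rw [← mul_assoc, F_E, add_mul, smul_mul_assoc, sub_mul, one_mul, mul_assoc]
  induction s with
  | zero =>
    simp only [zero_add, pow_one, pow_zero, one_mul]
    rw [key, hγ, hβ]
    have hg : gauss k q⁻¹ 1 = 1 := by simp [gauss]
    have hs : (1 - c) • γ = (1 : k) • γ - c • γ := sub_smul (1 : k) c γ
    rw [hg, one_mul, hs, one_smul]
  | succ s ih =>
    rw [pow_succ' (E k n q) (s + 1), mul_assoc, key, ih, g_E_pow k n q hn hq c γ hγ]
    rw [mul_add, mul_smul_comm, mul_smul_comm, ← mul_assoc _ (E k n q ^ s), ← pow_succ',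
      mul_assoc (E k n q)]
    rw [smul_add, smul_smul, smul_smul, ← pow_succ', add_assoc]
    congr 1
    rw [← one_smul k (E k n q ^ (s + 1) * γ), smul_smul, smul_smul, smul_smul,
      ← sub_smul, ← add_smul]
    congr 1
    have h1 := gauss_succ k q⁻¹ (s + 1)
    have h2 := gauss_succ' k q⁻¹ (s + 1)
    have h3 : gauss k q⁻¹ (s + 1) * q⁻¹ = gauss k q⁻¹ (s + 1) + q⁻¹ ^ (s + 1) - 1 := by
      linear_combination h2 - h1
    rw [h2]
    linear_combination h3

end QFL

open QFL in
/-- Lemma 2.8: the lowering identity for `E^s γ`. -/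
theorem statement3 (k : Type) [Field k] [IsAlgClosed k] [CharZero k]
    (n : ℕ) (hn : 0 < n) (h4 : 4 ∣ n) (q : k) (hq : IsPrimitiveRoot q (n ^ 2))
    (i j : ℕ) (hi1 : 1 ≤ i) (hi2 : i ≤ n ^ 2 / 2) (hj : j ≤ 1)
    (γ : U k n q)
    (hγ1 : (Kinv k n q * Kh k n q) * γ = (q ^ (-(2 * (i : ℤ)))) • γ)
    (hγ2 : F k n q * γ = beta k n q i j) :
    ∀ s : ℕ, 1 ≤ s → s ≤ n ^ 2 - 1 →
      F k n q * (E k n q ^ s * γ) - (q⁻¹ ^ s) • (E k n q ^ s * beta k n q i j) =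
        (gauss k q⁻¹ s * (1 - q ^ (1 - (s : ℤ) - 2 * (i : ℤ)))) •
          (E k n q ^ (s - 1) * γ) := by
  intro s hs _
  obtain ⟨s, rfl⟩ : ∃ t, s = t + 1 := ⟨s - 1, by omega⟩
  have hq1 : q ^ (n ^ 2) = 1 := hq.pow_eq_one
  have hq0 : q ≠ 0 := hq.ne_zero (pow_pos hn 2).ne'
  have hc : q ^ (1 - ((s + 1 : ℕ) : ℤ) - 2 * (i : ℤ)) = q⁻¹ ^ s * q ^ (-(2 * (i : ℤ))) := by
    rw [← zpow_natCast, inv_zpow', ← zpow_add₀ hq0]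
    congr 1
    push_cast
    ring
  rw [hc, main_aux k n q hn hq1 _ γ _ hγ1 hγ2 s, add_sub_cancel_left, Nat.add_sub_cancel]
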